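/- Let q ≥ 1, let {X_{i,j} : i ≥ 1, j ≥ 1} be a double array of integrable (not necessarily nonnegative) random variables satisfying Condition (H_{2q}), let {b_n : n ≥ 1} be an increasing sequence of positive constants, and let {λ_{m,n,i,j}} be positive constants with a_{m,n} = ∑_{s=1}^{m} ∑_{t=1}^{n} λ_{m,n,s,t}. For s ≥ 0, m ≥ 1, n ≥ 1 set X_{s,m,n} = −b_{2^s}·1(X_{m,n} < −b_{2^s}) + X_{m,n}·1(|X_{m,n}| ≤ b_{2^s}) + b_{2^s}·1(X_{m,n} > b_{2^s}). Then there exists a finite constant C(q) depending only on q such that for all m ≥ 1, n ≥ 1: E( max_{1≤u<2^m, 1≤v<2^n} |∑_{i=1}^{u} ∑_{j=1}^{v} (X_{m+n,i,j} − E X_{m+n,i,j})|^{2q} ) ≤ C(q) ( ∑_{s=1}^{m} ∑_{t=1}^{n} 2^{s+t} b_{2^{s+t}} max_{1≤i<2^m, 1≤j<2^n} P(|X_{i,j}| > b_{2^{s+t−2}}) )^{2q} + C(q) a_{m,n}^{2q} ∑_{s=1}^{m} ∑_{t=1}^{n} 2^{m+n} λ_{m,n,s,t}^{−2q} ( max_{1≤i<2^m,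 1≤j<2^n} E|X_{s+t,i,j}|^{2q} + 2^{(s+t)(q−1)} max_{1≤i<2^m, 1≤j<2^n} (E X_{s+t,i,j}^2)^q ). -/

import Mathlib

/-!
The argument is a chaining in the number of terms and in the truncation level at once. For
`u < 2 ^ m` and `v < 2 ^ n`, binary expansion splits `[1, u] × [1, v]` into at most one dyadic
rectangle of size `2 ^ (s - 1) × 2 ^ (t - 1)` for each `(s, t)` with `1 ≤ s ≤ m`, `1 ≤ t ≤ n`. On
that rectangle the truncation at level `m + n` is replaced by the one at level `s + t`, and the
error is telescoped along the path `s + t, …, s + n, …, m + n`. After exchanging sums, the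
increment from level `s + t - 1` to `s + t` is summed only over sub-rectangles of a dyadic
rectangle of size `2 ^ s × 2 ^ t` (`chaining`).

The increments of a two-sided truncation have no sign, but they are a difference of two
nonnegative functions, one nondecreasing and one nonincreasing in `X` (`tr_sub_tr`). Each is
therefore bounded by its sum over the full dyadic rectangle, which after centring is again a sum
of monotone functions of the `X i j`; the expectations lost in this step produce the sum of tail
probabilities (`abs_sum_ctr_tr_sub_le`).

It remains to bound maxima over dyadic blocks. Their `2q`-th powers are at most the sum over all
blocks, to which Condition (H_{2q}) applies blockwise; the number of blocks times the block size
is `2 ^ (m + n)` (`integral_blkSum_le`). The weights `λ` enter through the elementary inequality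
`∑ A ≤ (∑ λ) * (∑ λ ^ (-2q) * A ^ (2q)) ^ (1 / (2q))` (`maxDS_pow_le`).
-/


open MeasureTheory ProbabilityTheory Finset Filter
open scoped NNReal ENNReal

noncomputable section

/-- `rlog x` is the natural logarithm of `max x 2`. -/
def rlog (x : ℝ) : ℝ := Real.log (max x 2)

/-- `itlog k x` is the `k`-fold iterate of `rlog` applied to `x`. -/
def itlog : ℕ → ℝ → ℝ
  | 0, x => x
  | k + 1, x => rlog (itlog k x)

/-- `logNu2 ν x = (log x)(log log x) ⋯ (log ⋯ log x)²`, the product of the first `ν`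
iterated logarithms of `x`, with the last (`ν`-fold iterated) factor squared. -/
def logNu2 (ν : ℕ) (x : ℝ) : ℝ := (∏ k ∈ Finset.Icc 1 ν, itlog k x) * itlog ν x

/-- The maximum of the (nonnegative) values `g i j` over `1 ≤ i ≤ M`, `1 ≤ j ≤ N`. -/
def maxNN (M N : ℕ) (g : ℕ → ℕ → ℝ) : ℝ :=
  (((Finset.Icc 1 M ×ˢ Finset.Icc 1 N).sup fun p => Real.toNNReal (g p.1 p.2) : ℝ≥0) : ℝ)

/-- `maxDS f m n = max_{1 ≤ u ≤ m, 1 ≤ v ≤ n} |∑_{i=1}^{u} ∑_{j=1}^{v} f i j|`. -/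
def maxDS (f : ℕ → ℕ → ℝ) (m n : ℕ) : ℝ :=
  maxNN m n fun u v => |∑ i ∈ Finset.Icc 1 u, ∑ j ∈ Finset.Icc 1 v, f i j|

/-- Index set of a doubly-indexed array: pairs of indices that are both at least `1`. -/
abbrev PIdx : Type := {k : ℕ × ℕ // 1 ≤ k.1 ∧ 1 ≤ k.2}

/-- Condition (H_{2q}) with a given constant `C`: for every finite subfamily and every
family of nondecreasing functions (whose relevant expectations are finite),
`E|∑ (f_λ(X_λ) - E f_λ(X_λ))|^{2q}
   ≤ C (|I| max E|f_λ(X_λ)|^{2q} + |I|^q max (E f_λ(X_λ)²)^q)`. -/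
def CondHWith {Ω : Type*} [MeasureSpace Ω] {Λ : Type*} (q C : ℝ) (X : Λ → Ω → ℝ) : Prop :=
  ∀ (I : Finset Λ) (hI : I.Nonempty) (f : Λ → ℝ → ℝ),
    (∀ l ∈ I, Monotone (f l)) →
    (∀ l ∈ I, Integrable fun ω => f l (X l ω)) →
    (∀ l ∈ I, Integrable fun ω => (f l (X l ω)) ^ 2) →
    (∀ l ∈ I, Integrable fun ω => |f l (X l ω)| ^ (2 * q)) →
    (Integrable fun ω => |∑ l ∈ I, (f l (X l ω) - ∫ ω', f l (X l ω'))| ^ (2 * q)) →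
    ∫ ω, |∑ l ∈ I, (f l (X l ω) - ∫ ω', f l (X l ω'))| ^ (2 * q) ≤
      C * ((I.card : ℝ) * I.sup' hI (fun l => ∫ ω, |f l (X l ω)| ^ (2 * q)) +
           (I.card : ℝ) ^ q * I.sup' hI fun l => (∫ ω, (f l (X l ω)) ^ 2) ^ q)

/-- Condition (H_{2q}): there is a finite constant for which `CondHWith` holds. -/
def CondH {Ω : Type*} [MeasureSpace Ω] {Λ : Type*} (q : ℝ) (X : Λ → Ω → ℝ) : Prop :=
  ∃ C : ℝ, CondHWith q C X

/-- The family `X` is stochastically dominated by the random variable `Y`: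
`sup_λ P(|X_λ| > x) ≤ P(|Y| > x)` for every real `x`. -/
def StochDom {Ω : Type*} [MeasureSpace Ω] {Λ : Type*} (X : Λ → Ω → ℝ) (Y : Ω → ℝ) : Prop :=
  ∀ x : ℝ, ∀ l : Λ, volume {ω | x < |X l ω|} ≤ volume {ω | x < |Y ω|}

/-- Uniform integrability: `sup_λ E(|Y_λ| 1(|Y_λ| > a)) → 0` as `a → ∞`. -/
def UnifInt {Ω : Type*} [MeasureSpace Ω] {Λ : Type*} (Y : Λ → Ω → ℝ) : Prop :=
  (∀ l, Integrable (Y l)) ∧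
  ∀ ε : ℝ, 0 < ε → ∃ a : ℝ, ∀ l, ∫ ω, (if a < |Y l ω| then |Y l ω| else 0) ≤ ε

/-- A slowly varying function: positive and measurable on `[0,∞)` with
`L(cx)/L(x) → 1` as `x → ∞` for every `c > 0`. -/
def SlowlyVarying (L : ℝ → ℝ) : Prop :=
  Measurable L ∧ (∀ x : ℝ, 0 ≤ x → 0 < L x) ∧
  ∀ c : ℝ, 0 < c → Tendsto (fun x => L (c * x) / L x) atTop (nhds 1)

/-- `Lt` is a de Bruijn conjugate of `L`. -/
def DeBruijnConjugate (L Lt : ℝ → ℝ) : Prop :=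
  SlowlyVarying Lt ∧
  Tendsto (fun x => L x * Lt (x * L x)) atTop (nhds 1) ∧
  Tendsto (fun x => Lt x * L (x * Lt x)) atTop (nhds 1)

/-- Truncation from above at level `b (2^s)`:
`X_{i,j} 1(X_{i,j} ≤ b_{2^s}) + b_{2^s} 1(X_{i,j} > b_{2^s})`. -/
def truncUp {Ω : Type*} (X : ℕ → ℕ → Ω → ℝ) (b : ℕ → ℝ) (s i j : ℕ) (ω : Ω) : ℝ :=
  if X i j ω ≤ b (2 ^ s) then X i j ω else b (2 ^ s)

/-- Two-sided truncation at level `b (2^s)`: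
`-b_{2^s} 1(X < -b_{2^s}) + X 1(|X| ≤ b_{2^s}) + b_{2^s} 1(X > b_{2^s})`. -/
def truncTwo {Ω : Type*} (X : ℕ → ℕ → Ω → ℝ) (b : ℕ → ℝ) (s i j : ℕ) (ω : Ω) : ℝ :=
  if X i j ω < -b (2 ^ s) then -b (2 ^ s)
  else if b (2 ^ s) < X i j ω then b (2 ^ s) else X i j ω

namespace RosenthalMax

/-! ### Dyadic blocks and levels -/

/-- The `k`-th dyadic block of length `2 ^ a` in `{1, …, M}`, that is
`(k * 2 ^ a, (k + 1) * 2 ^ a] ∩ [1, M]`. -/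
def blk (M a k : ℕ) : Finset ℕ := {i ∈ Finset.Icc 1 M | (i - 1) / 2 ^ a = k}

lemma exists_lev (u i : ℕ) : ∃ s, (i - 1) / 2 ^ s = u / 2 ^ s := by
  refine ⟨u + i, ?_⟩
  have h : u + i < 2 ^ (u + i) := Nat.lt_two_pow_self
  rw [Nat.div_eq_of_lt (by omega), Nat.div_eq_of_lt (by omega)]

/-- The level of `i` relative to `u`: the least `s` such that `i - 1` and `u` have the same
integer part after division by `2 ^ s`. For `1 ≤ i ≤ u` it is the unique `s ≥ 1` with
`⌊u / 2 ^ s⌋ * 2 ^ s < i ≤ ⌊u / 2 ^ (s - 1)⌋ * 2 ^ (s - 1)`. -/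
def lev (u i : ℕ) : ℕ := Nat.find (exists_lev u i)

lemma lev_spec (u i : ℕ) : (i - 1) / 2 ^ lev u i = u / 2 ^ lev u i :=
  Nat.find_spec (exists_lev u i)

lemma div_eq_of_le {x y s t : ℕ} (hst : s ≤ t) (h : x / 2 ^ s = y / 2 ^ s) :
    x / 2 ^ t = y / 2 ^ t := by
  obtain ⟨d, rfl⟩ := Nat.exists_eq_add_of_le hst
  rw [pow_add, ← Nat.div_div_eq_div_mul, ← Nat.div_div_eq_div_mul, h]

lemma div_eq_of_lev_le {u i s : ℕ} (h : lev u i ≤ s) : (i - 1) / 2 ^ s = u / 2 ^ s :=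
  div_eq_of_le h (lev_spec u i)

lemma lev_pos {u i : ℕ} (hi : 1 ≤ i) (hiu : i ≤ u) : 1 ≤ lev u i := by
  by_contra h
  have h0 : lev u i = 0 := by omega
  have := lev_spec u i
  rw [h0] at this
  simp at this
  omega

lemma lev_le {u i m : ℕ} (hiu : i ≤ u) (hu : u < 2 ^ m) : lev u i ≤ m := by
  apply Nat.find_min'
  rw [Nat.div_eq_of_lt (by omega), Nat.div_eq_of_lt hu]

/-- The part of `{1, …, u}` of level `s` is empty or a single full dyadic block of length
`2 ^ (s - 1)`. -/
lemma level_set_eq {u M s : ℕ} (hs : 1 ≤ s) (huM : u ≤ M) :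
    ({i ∈ Finset.Icc 1 u | lev u i = s} : Finset ℕ) = ∅ ∨
    ({i ∈ Finset.Icc 1 u | lev u i = s} : Finset ℕ) = blk M (s - 1) (u / 2 ^ (s - 1) - 1) := by
  obtain ⟨a, rfl⟩ : ∃ a, s = a + 1 := ⟨s - 1, by omega⟩
  simp only [Nat.add_sub_cancel]
  have hdd : ∀ x : ℕ, x / 2 ^ (a + 1) = x / 2 ^ a / 2 := fun x => by
    rw [pow_succ, Nat.div_div_eq_div_mul]
  have hlev : ∀ i, lev u i = a + 1 ↔
      ((i - 1) / 2 ^ a / 2 = u / 2 ^ a / 2 ∧ (i - 1) / 2 ^ a ≠ u / 2 ^ a) := by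
    intro i
    rw [← hdd, ← hdd]
    constructor
    · intro h
      refine ⟨div_eq_of_lev_le h.le, fun h' => ?_⟩
      have : lev u i ≤ a := Nat.find_min' _ h'
      omega
    · rintro ⟨h1, h2⟩
      have h3 : lev u i ≤ a + 1 := Nat.find_min' _ h1
      have h4 : ¬ lev u i ≤ a := fun h => h2 (div_eq_of_lev_le h)
      omega
  have hmono : ∀ i, i ≤ u → (i - 1) / 2 ^ a ≤ u / 2 ^ a := fun i hi =>
    Nat.div_le_div_right (by omega)
  rcases Nat.even_or_odd' (u / 2 ^ a) with ⟨c, hc | hc⟩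
  · left
    ext i
    simp only [Finset.mem_filter, Finset.mem_Icc, hlev, Finset.notMem_empty, iff_false]
    rintro ⟨⟨h1, h2⟩, h3, h4⟩
    have := hmono i h2
    omega
  · right
    ext i
    simp only [Finset.mem_filter, Finset.mem_Icc, hlev, blk]
    constructor
    · rintro ⟨⟨h1, h2⟩, h3, h4⟩
      have := hmono i h2
      exact ⟨⟨h1, h2.trans huM⟩, by omega⟩
    · rintro ⟨⟨h1, h2⟩, h3⟩
      have hiu : i ≤ u := by
        by_contra hcon
        have : u / 2 ^ a ≤ (i - 1) / 2 ^ a := Nat.div_le_div_right (by omega)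
        omega
      exact ⟨⟨h1, hiu⟩, by omega, by omega⟩

/-- Indices of level at most `s` all lie in the one dyadic block of length `2 ^ s` whose index is
that of `u`. -/
lemma level_subset {u M s : ℕ} (huM : u ≤ M) (p : ℕ → Prop) [DecidablePred p]
    (hp : ∀ i, p i → lev u i ≤ s) :
    ({i ∈ Finset.Icc 1 u | p i} : Finset ℕ) ⊆ blk M s (u / 2 ^ s) := by
  intro i hi
  simp only [Finset.mem_filter, Finset.mem_Icc, blk] at hi ⊢
  exact ⟨⟨hi.1.1, hi.1.2.trans huM⟩, div_eq_of_lev_le (hp i hi.2)⟩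

lemma card_blk_le (M a k : ℕ) : (blk M a k).card ≤ 2 ^ a := by
  have hpos : 0 < 2 ^ a := by positivity
  have : blk M a k ⊆ Finset.Icc (k * 2 ^ a + 1) (k * 2 ^ a + 2 ^ a) := by
    intro i hi
    simp only [blk, Finset.mem_filter, Finset.mem_Icc] at hi ⊢
    have h1 := Nat.div_mul_le_self (i - 1) (2 ^ a)
    have h2 := Nat.lt_div_mul_add (a := i - 1) hpos
    rw [hi.2] at h1 h2
    omega
  refine (Finset.card_le_card this).trans ?_
  simp

lemma div_lt_of_lt {u m a : ℕ} (ha : a ≤ m) (hu : u < 2 ^ m) : u / 2 ^ a < 2 ^ (m - a) := by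
  rw [Nat.div_lt_iff_lt_mul (by positivity), ← pow_add]
  rwa [Nat.sub_add_cancel ha]

lemma sum_fiber_lev {u m : ℕ} (hu : u < 2 ^ m) (g : ℕ → ℕ → ℝ) :
    ∑ i ∈ Finset.Icc 1 u, g (lev u i) i =
      ∑ s ∈ Finset.Icc 1 m, ∑ i ∈ Finset.Icc 1 u with lev u i = s, g s i := by
  rw [← Finset.sum_fiberwise_of_maps_to (s := Finset.Icc 1 u) (t := Finset.Icc 1 m)
    (g := fun i => lev u i)]
  · refine Finset.sum_congr rfl fun s _ => Finset.sum_congr rfl fun i hi => ?_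
    rw [(Finset.mem_filter.1 hi).2]
  · intro i hi
    rw [Finset.mem_Icc] at hi ⊢
    exact ⟨lev_pos hi.1 hi.2, lev_le hi.2 hu⟩

lemma sum_telescope (f : ℕ → ℝ) {t n : ℕ} (h : t ≤ n) :
    ∑ τ ∈ Finset.Icc 1 n, (if t < τ then f τ - f (τ - 1) else 0) = f n - f t := by
  induction n, h using Nat.le_induction with
  | base =>
    rw [sub_self]
    refine Finset.sum_eq_zero fun τ hτ => if_neg ?_
    rw [Finset.mem_Icc] at hτ
    omega
  | succ n hn ih =>
    rw [Finset.sum_Icc_succ_top (by omega), ih, if_pos (by omega)]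
    simp

/-- Deterministic chaining bound: a rectangular sum of `Y (m + n)` is controlled by sums of
`Y (s + t)` over full dyadic blocks and sums of increments `Y (s + t) - Y (s + t - 1)` over
sub-rectangles of dyadic blocks. -/
lemma chaining (Y : ℕ → ℕ → ℕ → ℝ) (W V : ℕ → ℕ → ℝ) {m n u v M N : ℕ} (hn : 1 ≤ n)
    (hu : u < 2 ^ m) (hv : v < 2 ^ n) (huM : u ≤ M) (hvN : v ≤ N)
    (hW0 : ∀ s ∈ Finset.Icc 1 m, ∀ t ∈ Finset.Icc 1 n, 0 ≤ W s t)
    (hV0 : ∀ s ∈ Finset.Icc 1 m, ∀ t ∈ Finset.Icc 1 n, 0 ≤ V s t)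
    (hW : ∀ s ∈ Finset.Icc 1 m, ∀ t ∈ Finset.Icc 1 n,
      ∀ k < 2 ^ (m - (s - 1)), ∀ l < 2 ^ (n - (t - 1)),
      |∑ i ∈ blk M (s - 1) k, ∑ j ∈ blk N (t - 1) l, Y (s + t) i j| ≤ W s t)
    (hV : ∀ s ∈ Finset.Icc 1 m, ∀ t ∈ Finset.Icc 1 n,
      ∀ k < 2 ^ (m - s), ∀ l < 2 ^ (n - t), ∀ A ⊆ blk M s k, ∀ B ⊆ blk N t l,
      |∑ i ∈ A, ∑ j ∈ B, (Y (s + t) i j - Y (s + t - 1) i j)| ≤ V s t) :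
    |∑ i ∈ Finset.Icc 1 u, ∑ j ∈ Finset.Icc 1 v, Y (m + n) i j| ≤
      ∑ s ∈ Finset.Icc 1 m, ∑ t ∈ Finset.Icc 1 n, (W s t + 2 * V s t) := by
  have hpt : ∀ i ∈ Finset.Icc 1 u, ∀ j ∈ Finset.Icc 1 v, Y (m + n) i j =
      Y (lev u i + lev v j) i j +
      (∑ τ ∈ Finset.Icc 1 n, if lev v j < τ then
        (Y (lev u i + τ) i j - Y (lev u i + τ - 1) i j) else 0) +
      ∑ σ ∈ Finset.Icc 1 m, if lev u i < σ then (Y (σ + n) i j - Y (σ + n - 1) i j) else 0 := by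
    intro i hi j hj
    rw [Finset.mem_Icc] at hi hj
    have h1 := sum_telescope (fun τ => Y (lev u i + τ) i j) (lev_le hj.2 hv)
    have h2 := sum_telescope (fun σ => Y (σ + n) i j) (lev_le hi.2 hu)
    have e1 : (∑ τ ∈ Finset.Icc 1 n, if lev v j < τ then
        (Y (lev u i + τ) i j - Y (lev u i + τ - 1) i j) else 0) =
        Y (lev u i + n) i j - Y (lev u i + lev v j) i j := by
      rw [← h1]
      refine Finset.sum_congr rfl fun τ hτ => ?_
      rw [Nat.add_sub_assoc (Finset.mem_Icc.1 hτ).1]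
    have e2 : (∑ σ ∈ Finset.Icc 1 m, if lev u i < σ then
        (Y (σ + n) i j - Y (σ + n - 1) i j) else 0) =
        Y (m + n) i j - Y (lev u i + n) i j := by
      rw [← h2]
      refine Finset.sum_congr rfl fun σ hσ => ?_
      rw [Nat.sub_add_comm (Finset.mem_Icc.1 hσ).1]
    rw [e1, e2]
    ring
  have hsum : ∑ i ∈ Finset.Icc 1 u, ∑ j ∈ Finset.Icc 1 v, Y (m + n) i j =
      (∑ s ∈ Finset.Icc 1 m, ∑ t ∈ Finset.Icc 1 n,
        ∑ i ∈ Finset.Icc 1 u with lev u i = s, ∑ j ∈ Finset.Icc 1 v with lev v j = t,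
          Y (s + t) i j) +
      (∑ s ∈ Finset.Icc 1 m, ∑ τ ∈ Finset.Icc 1 n,
        ∑ i ∈ Finset.Icc 1 u with lev u i = s, ∑ j ∈ Finset.Icc 1 v with lev v j < τ,
          (Y (s + τ) i j - Y (s + τ - 1) i j)) +
      ∑ σ ∈ Finset.Icc 1 m, ∑ i ∈ Finset.Icc 1 u with lev u i < σ, ∑ j ∈ Finset.Icc 1 v,
          (Y (σ + n) i j - Y (σ + n - 1) i j) := by
    rw [Finset.sum_congr rfl fun i hi => Finset.sum_congr rfl (hpt i hi)]
    simp only [Finset.sum_add_distrib]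
    congr 1
    · congr 1
      · rw [sum_fiber_lev hu fun s i => ∑ j ∈ Finset.Icc 1 v, Y (s + lev v j) i j]
        refine Finset.sum_congr rfl fun s _ => ?_
        rw [Finset.sum_comm (s := Finset.Icc 1 n)]
        refine Finset.sum_congr rfl fun i _ => ?_
        exact sum_fiber_lev hv fun t j => Y (s + t) i j
      · rw [sum_fiber_lev hu fun s i => ∑ j ∈ Finset.Icc 1 v, ∑ τ ∈ Finset.Icc 1 n,
          if lev v j < τ then (Y (s + τ) i j - Y (s + τ - 1) i j) else 0]
        refine Finset.sum_congr rfl fun s _ => ?_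
        rw [Finset.sum_comm (s := Finset.Icc 1 n)]
        refine Finset.sum_congr rfl fun i _ => ?_
        rw [Finset.sum_comm]
        refine Finset.sum_congr rfl fun τ _ => ?_
        rw [Finset.sum_filter]
    · have : ∀ i ∈ Finset.Icc 1 u, ∑ j ∈ Finset.Icc 1 v, ∑ σ ∈ Finset.Icc 1 m,
          (if lev u i < σ then (Y (σ + n) i j - Y (σ + n - 1) i j) else 0) =
          ∑ σ ∈ Finset.Icc 1 m, if lev u i < σ then
            (∑ j ∈ Finset.Icc 1 v, (Y (σ + n) i j - Y (σ + n - 1) i j)) else 0 := by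
        intro i _
        rw [Finset.sum_comm]
        refine Finset.sum_congr rfl fun σ _ => ?_
        split_ifs <;> simp
      rw [Finset.sum_congr rfl this, Finset.sum_comm]
      refine Finset.sum_congr rfl fun σ _ => ?_
      rw [Finset.sum_filter]
  have b1 : |∑ s ∈ Finset.Icc 1 m, ∑ t ∈ Finset.Icc 1 n,
        ∑ i ∈ Finset.Icc 1 u with lev u i = s, ∑ j ∈ Finset.Icc 1 v with lev v j = t,
          Y (s + t) i j| ≤ ∑ s ∈ Finset.Icc 1 m, ∑ t ∈ Finset.Icc 1 n, W s t := by
    refine (Finset.abs_sum_le_sum_abs _ _).trans (Finset.sum_le_sum fun s hs => ?_)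
    refine (Finset.abs_sum_le_sum_abs _ _).trans (Finset.sum_le_sum fun t ht => ?_)
    have hs' := Finset.mem_Icc.1 hs
    have ht' := Finset.mem_Icc.1 ht
    rcases level_set_eq (s := s) hs'.1 huM with h | h
    · rw [h]; simpa using hW0 s hs t ht
    rcases level_set_eq (s := t) ht'.1 hvN with h' | h'
    · rw [h']; simpa using hW0 s hs t ht
    rw [h, h']
    have hk := div_lt_of_lt (a := s - 1) (by omega) hu
    have hl := div_lt_of_lt (a := t - 1) (by omega) hv
    exact hW s hs t ht _ ((Nat.sub_le _ _).trans_lt hk) _ ((Nat.sub_le _ _).trans_lt hl)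
  have b2 : |∑ s ∈ Finset.Icc 1 m, ∑ τ ∈ Finset.Icc 1 n,
        ∑ i ∈ Finset.Icc 1 u with lev u i = s, ∑ j ∈ Finset.Icc 1 v with lev v j < τ,
          (Y (s + τ) i j - Y (s + τ - 1) i j)| ≤
        ∑ s ∈ Finset.Icc 1 m, ∑ t ∈ Finset.Icc 1 n, V s t := by
    refine (Finset.abs_sum_le_sum_abs _ _).trans (Finset.sum_le_sum fun s hs => ?_)
    refine (Finset.abs_sum_le_sum_abs _ _).trans (Finset.sum_le_sum fun t ht => ?_)
    exact hV s hs t ht _ (div_lt_of_lt (Finset.mem_Icc.1 hs).2 hu) _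
      (div_lt_of_lt (Finset.mem_Icc.1 ht).2 hv) _ (level_subset huM _ fun i hi => hi.le) _
      (level_subset hvN _ fun i hi => hi.le)
  -- Increments in the first direction are taken at full height `n` in the second, so they fall
  -- under `hV` at `(σ, n)`; this accounts for the factor `2` in front of `V`.
  have b3 : |∑ σ ∈ Finset.Icc 1 m, ∑ i ∈ Finset.Icc 1 u with lev u i < σ, ∑ j ∈ Finset.Icc 1 v,
          (Y (σ + n) i j - Y (σ + n - 1) i j)| ≤
        ∑ s ∈ Finset.Icc 1 m, ∑ t ∈ Finset.Icc 1 n, V s t := by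
    refine (Finset.abs_sum_le_sum_abs _ _).trans (Finset.sum_le_sum fun s hs => ?_)
    have hnn : n ∈ Finset.Icc 1 n := Finset.mem_Icc.2 ⟨hn, le_rfl⟩
    refine le_trans ?_ (Finset.single_le_sum (f := fun t => V s t) (hV0 s hs) hnn)
    refine hV s hs n hnn _ (div_lt_of_lt (Finset.mem_Icc.1 hs).2 hu) _
      (div_lt_of_lt le_rfl hv) _ (level_subset huM _ fun i hi => hi.le) _ ?_
    intro j hj
    rw [Finset.mem_Icc] at hj
    simp only [blk, Finset.mem_filter, Finset.mem_Icc]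
    refine ⟨⟨hj.1, hj.2.trans hvN⟩, ?_⟩
    rw [Nat.div_eq_of_lt (by omega), Nat.div_eq_of_lt hv]
  rw [hsum]
  refine (abs_add_three _ _ _).trans ?_
  simp only [Finset.sum_add_distrib, ← Finset.mul_sum]
  linarith

/-! ### The maximum over a rectangle -/

lemma maxNN_nonneg (M N : ℕ) (g : ℕ → ℕ → ℝ) : 0 ≤ maxNN M N g := NNReal.coe_nonneg _

lemma le_maxNN {M N : ℕ} (g : ℕ → ℕ → ℝ) {i j : ℕ} (hi : i ∈ Finset.Icc 1 M)
    (hj : j ∈ Finset.Icc 1 N) : g i j ≤ maxNN M N g := by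
  have h : Real.toNNReal (g i j) ≤
      (Finset.Icc 1 M ×ˢ Finset.Icc 1 N).sup fun p => Real.toNNReal (g p.1 p.2) :=
    Finset.le_sup (f := fun p : ℕ × ℕ => Real.toNNReal (g p.1 p.2))
      (Finset.mk_mem_product hi hj)
  exact (Real.le_coe_toNNReal _).trans (NNReal.coe_le_coe.2 h)

lemma maxNN_le {M N : ℕ} (g : ℕ → ℕ → ℝ) {c : ℝ} (hc : 0 ≤ c)
    (h : ∀ i ∈ Finset.Icc 1 M, ∀ j ∈ Finset.Icc 1 N, g i j ≤ c) : maxNN M N g ≤ c := by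
  have : ((Finset.Icc 1 M ×ˢ Finset.Icc 1 N).sup fun p => Real.toNNReal (g p.1 p.2)) ≤
      Real.toNNReal c := by
    refine Finset.sup_le fun p hp => ?_
    rw [Finset.mem_product] at hp
    exact Real.toNNReal_le_toNNReal (h _ hp.1 _ hp.2)
  have h2 := NNReal.coe_le_coe.2 this
  rwa [Real.coe_toNNReal _ hc] at h2

/-! ### Truncations and their increments -/

/-- Truncation of a real number to the interval `[-c, c]`. -/
def tr (c x : ℝ) : ℝ := if x < -c then -c else if c < x then c else x

/-- The increment `min x⁺ c - min x⁺ a` (for `0 ≤ a ≤ c`) of the truncated positive part. -/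
def inc (a c x : ℝ) : ℝ := max 0 (min x c - a)

lemma tr_mono {c : ℝ} (hc : 0 ≤ c) : Monotone (tr c) := by
  intro x y hxy
  unfold tr
  split_ifs <;> linarith

lemma abs_tr_le {c : ℝ} (hc : 0 ≤ c) (x : ℝ) : |tr c x| ≤ c := by
  unfold tr
  split_ifs <;> rw [abs_le] <;> constructor <;> linarith

lemma inc_mono (a c : ℝ) : Monotone (inc a c) := by
  intro x y hxy
  unfold inc
  gcongr

lemma inc_nonneg (a c x : ℝ) : 0 ≤ inc a c x := le_max_left _ _

lemma tr_sub_tr {a c : ℝ} (ha : 0 ≤ a) (hac : a ≤ c) (x : ℝ) :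
    tr c x - tr a x = inc a c x + -inc a c (-x) := by
  unfold tr inc
  rcases max_cases 0 (min x c - a) with h | h <;> rcases max_cases 0 (min (-x) c - a) with h' | h' <;>
  rcases min_cases x c with g | g <;> rcases min_cases (-x) c with g' | g' <;>
  rw [h.1, h'.1] <;> split_ifs <;> linarith

lemma inc_le_abs_tr {a c : ℝ} (ha : 0 ≤ a) (hac : a ≤ c) (x : ℝ) : inc a c x ≤ |tr c x| := by
  refine max_le (abs_nonneg _) ?_
  refine le_trans ?_ (le_abs_self _)
  unfold tr
  rcases min_cases x c with g | g <;> split_ifs <;> linarith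

lemma abs_tr_neg {c : ℝ} (hc : 0 ≤ c) (x : ℝ) : |tr c (-x)| = |tr c x| := by
  have : tr c (-x) = -tr c x := by
    unfold tr
    split_ifs <;> linarith
  rw [this, abs_neg]

lemma inc_add_inc_le {a c : ℝ} (ha : 0 ≤ a) (hac : a ≤ c) (x : ℝ) :
    inc a c x + inc a c (-x) ≤ c * Set.indicator {y : ℝ | a < |y|} 1 x := by
  by_cases hx : a < |x|
  · rw [Set.indicator_of_mem (by exact hx)]
    unfold inc
    have h1 := min_le_right x c
    have h2 := min_le_right (-x) c
    have h3 := min_le_left x c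
    have h4 := min_le_left (-x) c
    simp only [Pi.one_apply, mul_one]
    rcases max_cases 0 (min x c - a) with h | h <;>
      rcases max_cases 0 (min (-x) c - a) with h' | h' <;> rw [h.1, h'.1] <;> linarith
  · rw [Set.indicator_of_notMem (by exact hx)]
    rw [not_lt, abs_le] at hx
    unfold inc
    have h3 := min_le_left x c
    have h4 := min_le_left (-x) c
    rw [max_eq_left (by linarith), max_eq_left (by linarith)]
    simp

/-! ### Moments of block sums -/

variable {Ω : Type} [MeasureSpace Ω]

/-- The centred variable `f (X i j) - E f (X i j)`. -/
def ctr (X : ℕ → ℕ → Ω → ℝ) (f : ℝ → ℝ) (i j : ℕ) (ω : Ω) : ℝ :=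
  f (X i j ω) - ∫ ω', f (X i j ω')

lemma ctr_measurable {X : ℕ → ℕ → Ω → ℝ} {f : ℝ → ℝ} (hf : Measurable f) {i j : ℕ}
    (hX : Measurable (X i j)) : Measurable (ctr X f i j) :=
  (hf.comp hX).sub_const _

/-- The sum over all dyadic blocks of size `2 ^ a × 2 ^ c` of the `2q`-th powers of the centred
block sums; it dominates the `2q`-th power of the largest block sum. -/
def blkSum (q : ℝ) (X : ℕ → ℕ → Ω → ℝ) (m n a c : ℕ) (f : ℝ → ℝ) (ω : Ω) : ℝ :=
  ∑ k ∈ Finset.range (2 ^ (m - a)), ∑ l ∈ Finset.range (2 ^ (n - c)),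
    |∑ i ∈ blk (2 ^ m - 1) a k, ∑ j ∈ blk (2 ^ n - 1) c l, ctr X f i j ω| ^ (2 * q)

lemma blkSum_nonneg (q : ℝ) (X : ℕ → ℕ → Ω → ℝ) (m n a c : ℕ) (f : ℝ → ℝ) (ω : Ω) :
    0 ≤ blkSum q X m n a c f ω :=
  Finset.sum_nonneg fun _ _ => Finset.sum_nonneg fun _ _ => by positivity

lemma pow_block_le_blkSum (q : ℝ) (X : ℕ → ℕ → Ω → ℝ) {m n a c : ℕ} (f : ℝ → ℝ) (ω : Ω)
    {k l : ℕ} (hk : k < 2 ^ (m - a)) (hl : l < 2 ^ (n - c)) :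
    |∑ i ∈ blk (2 ^ m - 1) a k, ∑ j ∈ blk (2 ^ n - 1) c l, ctr X f i j ω| ^ (2 * q) ≤
      blkSum q X m n a c f ω := by
  unfold blkSum
  refine le_trans ?_ (Finset.single_le_sum (f := fun k => ∑ l ∈ Finset.range (2 ^ (n - c)),
    |∑ i ∈ blk (2 ^ m - 1) a k, ∑ j ∈ blk (2 ^ n - 1) c l, ctr X f i j ω| ^ (2 * q))
    (fun _ _ => Finset.sum_nonneg fun _ _ => by positivity) (Finset.mem_range.2 hk))
  exact Finset.single_le_sum (f := fun l =>
    |∑ i ∈ blk (2 ^ m - 1) a k, ∑ j ∈ blk (2 ^ n - 1) c l, ctr X f i j ω| ^ (2 * q))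
    (fun _ _ => by positivity) (Finset.mem_range.2 hl)

variable [IsProbabilityMeasure (volume : Measure Ω)]

lemma integrable_of_bdd {g : Ω → ℝ} (hg : Measurable g) {K : ℝ} (hK : ∀ ω, |g ω| ≤ K) :
    Integrable g :=
  Integrable.of_bound hg.aestronglyMeasurable K (ae_of_all _ hK)

lemma abs_ctr_le {X : ℕ → ℕ → Ω → ℝ} {f : ℝ → ℝ} {K : ℝ} (hK : ∀ x, |f x| ≤ K) (i j : ℕ)
    (ω : Ω) : |ctr X f i j ω| ≤ 2 * K := by
  have h1 : ‖∫ ω', f (X i j ω')‖ ≤ K * (volume : Measure Ω).real Set.univ :=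
    norm_integral_le_of_norm_le_const (ae_of_all _ fun ω => hK _)
  rw [probReal_univ, mul_one, Real.norm_eq_abs] at h1
  have := abs_sub (f (X i j ω)) (∫ ω', f (X i j ω'))
  have := hK (X i j ω)
  unfold ctr
  linarith

/-- A block sum of bounded centred variables has an integrable power. -/
lemma integrable_blockSum {q : ℝ} (hq : 1 ≤ q) {X : ℕ → ℕ → Ω → ℝ}
    (hX : ∀ i j : ℕ, 1 ≤ i → 1 ≤ j → Measurable (X i j)) {f : ℝ → ℝ} (hf : Measurable f)
    {K : ℝ} (hK : ∀ x, |f x| ≤ K) {A B : Finset ℕ} (hA : ∀ i ∈ A, 1 ≤ i)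
    (hB : ∀ j ∈ B, 1 ≤ j) :
    Integrable fun ω => |∑ i ∈ A, ∑ j ∈ B, ctr X f i j ω| ^ (2 * q) := by
  have hm : Measurable fun ω => |∑ i ∈ A, ∑ j ∈ B, ctr X f i j ω| := by
    have : Measurable fun ω => ∑ i ∈ A, ∑ j ∈ B, ctr X f i j ω :=
      Finset.measurable_fun_sum _ fun i hi => Finset.measurable_fun_sum _ fun j hj =>
        ctr_measurable hf (hX i j (hA i hi) (hB j hj))
    exact this.abs
  refine integrable_of_bdd (K := (∑ i ∈ A, ∑ j ∈ B, 2 * K) ^ (2 * q)) (hm.pow_const _) fun ω => ?_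
  rw [abs_of_nonneg (by positivity)]
  refine Real.rpow_le_rpow (abs_nonneg _) ?_ (by linarith)
  refine (Finset.abs_sum_le_sum_abs _ _).trans (Finset.sum_le_sum fun i _ => ?_)
  exact (Finset.abs_sum_le_sum_abs _ _).trans (Finset.sum_le_sum fun j _ => abs_ctr_le hK i j ω)

/-- Condition (H_{2q}) applied to a rectangle of indices and a single bounded nondecreasing
function. -/
lemma block_moment {q C₀ : ℝ} (hq : 1 ≤ q) {X : ℕ → ℕ → Ω → ℝ}
    (hX : ∀ i j : ℕ, 1 ≤ i → 1 ≤ j → Measurable (X i j))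
    (hH : CondHWith q C₀ (fun k : PIdx => X k.1.1 k.1.2)) {f : ℝ → ℝ} (hf : Monotone f)
    {K : ℝ} (hK : ∀ x, |f x| ≤ K) {A B : Finset ℕ} {M N : ℕ} (hA : A ⊆ Finset.Icc 1 M)
    (hB : B ⊆ Finset.Icc 1 N) {c M₁ M₂ : ℝ} (hc : (A.card : ℝ) * B.card ≤ c)
    (hM₁0 : 0 ≤ M₁) (hM₂0 : 0 ≤ M₂)
    (hM₁ : ∀ i ∈ Finset.Icc 1 M, ∀ j ∈ Finset.Icc 1 N, ∫ ω, |f (X i j ω)| ^ (2 * q) ≤ M₁)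
    (hM₂ : ∀ i ∈ Finset.Icc 1 M, ∀ j ∈ Finset.Icc 1 N, (∫ ω, f (X i j ω) ^ 2) ^ q ≤ M₂) :
    ∫ ω, |∑ i ∈ A, ∑ j ∈ B, ctr X f i j ω| ^ (2 * q) ≤ |C₀| * (c * M₁ + c ^ q * M₂) := by
  have hA1 : ∀ i ∈ A, 1 ≤ i := fun i hi => (Finset.mem_Icc.1 (hA hi)).1
  have hB1 : ∀ i ∈ B, 1 ≤ i := fun i hi => (Finset.mem_Icc.1 (hB hi)).1
  have hc0 : 0 ≤ c := le_trans (by positivity) hc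
  have hfm : Measurable f := hf.measurable
  set I : Finset PIdx := (A ×ˢ B).subtype fun k => 1 ≤ k.1 ∧ 1 ≤ k.2 with hIdef
  have hmem : ∀ l : PIdx, l ∈ I ↔ l.1.1 ∈ A ∧ l.1.2 ∈ B := by
    intro l
    rw [hIdef, Finset.mem_subtype, Finset.mem_product]
  have hcard : (I.card : ℝ) = (A.card : ℝ) * B.card := by
    rw [hIdef, Finset.card_subtype, Finset.filter_true_of_mem, Finset.card_product]
    · push_cast; rfl
    · intro x hx
      rw [Finset.mem_product] at hx
      exact ⟨hA1 _ hx.1, hB1 _ hx.2⟩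
  have hsum : ∀ g : ℕ → ℕ → ℝ, ∑ l ∈ I, g l.1.1 l.1.2 = ∑ i ∈ A, ∑ j ∈ B, g i j := by
    intro g
    rw [← Finset.sum_product' (f := g)]
    refine Finset.sum_subtype_of_mem (fun k : ℕ × ℕ => g k.1 k.2) (p := fun k => 1 ≤ k.1 ∧ 1 ≤ k.2)
      fun x hx => ?_
    rw [Finset.mem_product] at hx
    exact ⟨hA1 _ hx.1, hB1 _ hx.2⟩
  rcases I.eq_empty_or_nonempty with hI | hI
  · have h0 : ∀ ω, ∑ i ∈ A, ∑ j ∈ B, ctr X f i j ω = 0 := by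
      intro ω
      rw [← hsum fun i j => ctr X f i j ω, hI, Finset.sum_empty]
    simp only [h0, abs_zero]
    rw [Real.zero_rpow (by linarith), integral_zero]
    positivity
  · have hbd : ∀ l ∈ I, Measurable fun ω => f (X l.1.1 l.1.2 ω) := fun l _ =>
      hfm.comp (hX _ _ l.2.1 l.2.2)
    have hsum' : ∀ ω, ∑ l ∈ I, (f (X l.1.1 l.1.2 ω) - ∫ ω', f (X l.1.1 l.1.2 ω')) =
        ∑ i ∈ A, ∑ j ∈ B, ctr X f i j ω := fun ω => hsum fun i j => ctr X f i j ω
    have key := hH I hI (fun _ => f) (fun l _ => hf)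
      (fun l hl => integrable_of_bdd (hbd l hl) fun ω => hK _)
      (fun l hl => integrable_of_bdd (K := K ^ 2) ((hbd l hl).pow_const 2) fun ω => by
        rw [abs_pow]; exact pow_le_pow_left₀ (abs_nonneg _) (hK _) 2)
      (fun l hl => integrable_of_bdd (K := K ^ (2 * q)) ((hbd l hl).abs.pow_const (2 * q))
        fun ω => by
          rw [abs_of_nonneg (by positivity)]
          exact Real.rpow_le_rpow (abs_nonneg _) (hK _) (by linarith))
      (by
        simp only [hsum']
        exact integrable_blockSum hq hX hfm hK hA1 hB1)
    simp only [hsum'] at key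
    refine key.trans ?_
    have s1 : I.sup' hI (fun l => ∫ ω, |f (X l.1.1 l.1.2 ω)| ^ (2 * q)) ≤ M₁ :=
      Finset.sup'_le _ _ fun l hl => hM₁ _ (hA ((hmem l).1 hl).1) _ (hB ((hmem l).1 hl).2)
    have s2 : I.sup' hI (fun l => (∫ ω, f (X l.1.1 l.1.2 ω) ^ 2) ^ q) ≤ M₂ :=
      Finset.sup'_le _ _ fun l hl => hM₂ _ (hA ((hmem l).1 hl).1) _ (hB ((hmem l).1 hl).2)
    obtain ⟨l₀, hl₀⟩ := hI
    have p1 : 0 ≤ I.sup' ⟨l₀, hl₀⟩ (fun l => ∫ ω, |f (X l.1.1 l.1.2 ω)| ^ (2 * q)) :=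
      le_trans (integral_nonneg fun ω => by positivity)
        (Finset.le_sup' (fun l : PIdx => ∫ ω, |f (X l.1.1 l.1.2 ω)| ^ (2 * q)) hl₀)
    have p2 : 0 ≤ I.sup' ⟨l₀, hl₀⟩ (fun l => (∫ ω, f (X l.1.1 l.1.2 ω) ^ 2) ^ q) :=
      le_trans (Real.rpow_nonneg (integral_nonneg fun ω => by positivity) _)
        (Finset.le_sup' (fun l : PIdx => (∫ ω, f (X l.1.1 l.1.2 ω) ^ 2) ^ q) hl₀)
    rw [hcard]
    have hAB : (0 : ℝ) ≤ (A.card : ℝ) * B.card := by positivity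
    have hq' : ((A.card : ℝ) * B.card) ^ q ≤ c ^ q := Real.rpow_le_rpow hAB hc (by linarith)
    refine mul_le_mul (le_abs_self _) ?_ (by positivity) (abs_nonneg _)
    exact add_le_add (mul_le_mul hc s1 p1 hc0)
      (mul_le_mul hq' s2 p2 (by positivity))

lemma blk_subset (M a k : ℕ) : blk M a k ⊆ Finset.Icc 1 M := Finset.filter_subset _ _

lemma one_le_of_mem_blk {M a k i : ℕ} (h : i ∈ blk M a k) : 1 ≤ i :=
  (Finset.mem_Icc.1 (blk_subset _ _ _ h)).1

lemma integrable_blkSum {q : ℝ} (hq : 1 ≤ q) {X : ℕ → ℕ → Ω → ℝ}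
    (hX : ∀ i j : ℕ, 1 ≤ i → 1 ≤ j → Measurable (X i j)) {f : ℝ → ℝ} (hf : Measurable f)
    {K : ℝ} (hK : ∀ x, |f x| ≤ K) (m n a c : ℕ) : Integrable (blkSum q X m n a c f) :=
  integrable_finsetSum _ fun _ _ => integrable_finsetSum _ fun _ _ =>
    integrable_blockSum hq hX hf hK (fun _ => one_le_of_mem_blk) (fun _ => one_le_of_mem_blk)

/-- The number of blocks times the size of a block is `2 ^ (m + n)`, which yields the factor on the
right-hand side. -/
lemma integral_blkSum_le {q C₀ : ℝ} (hq : 1 ≤ q) {X : ℕ → ℕ → Ω → ℝ}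
    (hX : ∀ i j : ℕ, 1 ≤ i → 1 ≤ j → Measurable (X i j))
    (hH : CondHWith q C₀ (fun k : PIdx => X k.1.1 k.1.2)) {f : ℝ → ℝ} (hf : Monotone f)
    {K : ℝ} (hK0 : 0 ≤ K) (hK : ∀ x, |f x| ≤ |tr K x|) {m n a c r : ℕ}
    (ha : a ≤ m) (hc : c ≤ n) (hr : a + c ≤ r) :
    ∫ ω, blkSum q X m n a c f ω ≤ |C₀| * ((2 : ℝ) ^ (m + n) *
      (maxNN (2 ^ m - 1) (2 ^ n - 1) (fun i j => ∫ ω, |tr K (X i j ω)| ^ (2 * q)) +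
        (2 : ℝ) ^ ((r : ℝ) * (q - 1)) *
          maxNN (2 ^ m - 1) (2 ^ n - 1) (fun i j => (∫ ω, tr K (X i j ω) ^ 2) ^ q))) := by
  set M₁ := maxNN (2 ^ m - 1) (2 ^ n - 1) (fun i j => ∫ ω, |tr K (X i j ω)| ^ (2 * q)) with hM₁
  set M₂ := maxNN (2 ^ m - 1) (2 ^ n - 1) (fun i j => (∫ ω, tr K (X i j ω) ^ 2) ^ q) with hM₂
  have hM₁0 : 0 ≤ M₁ := maxNN_nonneg _ _ _
  have hM₂0 : 0 ≤ M₂ := maxNN_nonneg _ _ _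
  have hfK : ∀ x, |f x| ≤ K := fun x => (hK x).trans (abs_tr_le hK0 x)
  have hfm := hf.measurable
  have htm := (tr_mono hK0).measurable
  have hXm : ∀ i ∈ Finset.Icc 1 (2 ^ m - 1), ∀ j ∈ Finset.Icc 1 (2 ^ n - 1),
      Measurable (X i j) := fun i hi j hj =>
    hX i j (Finset.mem_Icc.1 hi).1 (Finset.mem_Icc.1 hj).1
  have hb1 : ∀ i ∈ Finset.Icc 1 (2 ^ m - 1), ∀ j ∈ Finset.Icc 1 (2 ^ n - 1),
      ∫ ω, |f (X i j ω)| ^ (2 * q) ≤ M₁ := by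
    intro i hi j hj
    refine le_trans ?_ (le_maxNN (fun i j => ∫ ω, |tr K (X i j ω)| ^ (2 * q)) hi hj)
    refine integral_mono_of_nonneg (ae_of_all _ fun ω => by positivity) ?_
      (ae_of_all _ fun ω => Real.rpow_le_rpow (abs_nonneg _) (hK _) (by linarith))
    refine integrable_of_bdd (K := K ^ (2 * q))
      ((htm.comp (hXm i hi j hj)).abs.pow_const (2 * q)) fun ω => ?_
    rw [abs_of_nonneg (by positivity)]
    exact Real.rpow_le_rpow (abs_nonneg _) (abs_tr_le hK0 _) (by linarith)
  have hb2 : ∀ i ∈ Finset.Icc 1 (2 ^ m - 1), ∀ j ∈ Finset.Icc 1 (2 ^ n - 1),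
      (∫ ω, f (X i j ω) ^ 2) ^ q ≤ M₂ := by
    intro i hi j hj
    refine le_trans ?_ (le_maxNN (fun i j => (∫ ω, tr K (X i j ω) ^ 2) ^ q) hi hj)
    refine Real.rpow_le_rpow (integral_nonneg fun ω => by positivity) ?_ (by linarith)
    refine integral_mono_of_nonneg (ae_of_all _ fun ω => by positivity) ?_
      (ae_of_all _ fun ω => sq_le_sq.2 (hK _))
    refine integrable_of_bdd (K := K ^ 2)
      ((htm.comp (hXm i hi j hj)).pow_const 2) fun ω => ?_
    rw [abs_pow]
    exact pow_le_pow_left₀ (abs_nonneg _) (abs_tr_le hK0 _) 2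
  have hblk : ∀ k l, ∫ ω, |∑ i ∈ blk (2 ^ m - 1) a k, ∑ j ∈ blk (2 ^ n - 1) c l,
      ctr X f i j ω| ^ (2 * q) ≤
      |C₀| * ((2 : ℝ) ^ (a + c) * M₁ + ((2 : ℝ) ^ (a + c)) ^ q * M₂) := by
    intro k l
    refine block_moment hq hX hH hf hfK (blk_subset _ _ _) (blk_subset _ _ _) ?_ hM₁0 hM₂0 hb1 hb2
    have h := Nat.mul_le_mul (card_blk_le (2 ^ m - 1) a k) (card_blk_le (2 ^ n - 1) c l)
    rw [← pow_add] at h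
    exact_mod_cast h
  have hint : ∀ k l, Integrable fun ω => |∑ i ∈ blk (2 ^ m - 1) a k,
      ∑ j ∈ blk (2 ^ n - 1) c l, ctr X f i j ω| ^ (2 * q) := fun k l =>
    integrable_blockSum hq hX hfm hfK (fun _ => one_le_of_mem_blk) (fun _ => one_le_of_mem_blk)
  unfold blkSum
  rw [integral_finsetSum _ fun k _ => integrable_finsetSum _ fun l _ => hint k l]
  have : ∀ k ∈ Finset.range (2 ^ (m - a)), ∫ ω, ∑ l ∈ Finset.range (2 ^ (n - c)),
      |∑ i ∈ blk (2 ^ m - 1) a k, ∑ j ∈ blk (2 ^ n - 1) c l, ctr X f i j ω| ^ (2 * q) ≤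
      ∑ l ∈ Finset.range (2 ^ (n - c)),
        |C₀| * ((2 : ℝ) ^ (a + c) * M₁ + ((2 : ℝ) ^ (a + c)) ^ q * M₂) := by
    intro k _
    rw [integral_finsetSum _ fun l _ => hint k l]
    exact Finset.sum_le_sum fun l _ => hblk k l
  refine (Finset.sum_le_sum this).trans ?_
  simp only [Finset.sum_const, Finset.card_range, nsmul_eq_mul]
  push_cast
  have e1 : (2 : ℝ) ^ (m + n) = 2 ^ (m - a) * 2 ^ (n - c) * 2 ^ (a + c) := by
    rw [← pow_add, ← pow_add]
    congr 1
    omega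
  have e2 : ((2 : ℝ) ^ (a + c)) ^ q ≤ 2 ^ (a + c) * (2 : ℝ) ^ ((r : ℝ) * (q - 1)) := by
    have h1 : ((2 : ℝ) ^ (a + c)) ^ q = 2 ^ (a + c) * (2 : ℝ) ^ (((a + c : ℕ) : ℝ) * (q - 1)) := by
      rw [← Real.rpow_natCast, ← Real.rpow_mul (by norm_num), ← Real.rpow_add (by norm_num)]
      congr 1
      ring
    rw [h1]
    gcongr
    norm_num
  calc (2 : ℝ) ^ (m - a) * (2 ^ (n - c) *
        (|C₀| * ((2 : ℝ) ^ (a + c) * M₁ + ((2 : ℝ) ^ (a + c)) ^ q * M₂)))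
      ≤ (2 : ℝ) ^ (m - a) * (2 ^ (n - c) * (|C₀| * ((2 : ℝ) ^ (a + c) * M₁ +
          (2 ^ (a + c) * (2 : ℝ) ^ ((r : ℝ) * (q - 1))) * M₂))) := by gcongr
    _ = _ := by rw [e1]; ring

/-- Centred increments of the truncations over a sub-rectangle `A × B` of a block `A' × B'`. The
positive and negative parts of the increment are monotone in `X`, so both are dominated by their
sums over the full block, at the cost of twice their expectations. -/
lemma abs_sum_ctr_tr_sub_le {X : ℕ → ℕ → Ω → ℝ}
    (hX : ∀ i j : ℕ, 1 ≤ i → 1 ≤ j → Measurable (X i j)) {x₁ x₂ : ℝ} (h₁ : 0 ≤ x₁)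
    (h₁₂ : x₁ ≤ x₂) {A B A' B' : Finset ℕ} (hA : A ⊆ A') (hB : B ⊆ B')
    (hA' : ∀ i ∈ A', 1 ≤ i) (hB' : ∀ j ∈ B', 1 ≤ j) {p : ℝ}
    (hp : ∀ i ∈ A', ∀ j ∈ B', (volume {ω | x₁ < |X i j ω|}).toReal ≤ p) (ω : Ω) :
    |∑ i ∈ A, ∑ j ∈ B, (ctr X (tr x₂) i j ω - ctr X (tr x₁) i j ω)| ≤
      |∑ i ∈ A', ∑ j ∈ B', ctr X (inc x₁ x₂) i j ω| +
      |∑ i ∈ A', ∑ j ∈ B', ctr X (fun x => -inc x₁ x₂ (-x)) i j ω| +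
      2 * ((A'.card : ℝ) * B'.card * (x₂ * p)) := by
  have h₂ : 0 ≤ x₂ := h₁.trans h₁₂
  have hmP : Measurable (inc x₁ x₂) := (inc_mono _ _).measurable
  have hmN : Measurable fun x => -inc x₁ x₂ (-x) := (hmP.comp measurable_neg).neg
  have hP : ∀ i ∈ A', ∀ j ∈ B', Integrable fun ω => inc x₁ x₂ (X i j ω) := fun i hi j hj =>
    integrable_of_bdd (K := x₂) (hmP.comp (hX i j (hA' i hi) (hB' j hj))) fun ω => by
      rw [abs_of_nonneg (inc_nonneg _ _ _)]
      exact (inc_le_abs_tr h₁ h₁₂ _).trans (abs_tr_le h₂ _)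
  have hN : ∀ i ∈ A', ∀ j ∈ B', Integrable fun ω => -inc x₁ x₂ (-X i j ω) := fun i hi j hj =>
    integrable_of_bdd (K := x₂) (hmN.comp (hX i j (hA' i hi) (hB' j hj))) fun ω => by
      rw [abs_neg, abs_of_nonneg (inc_nonneg _ _ _)]
      exact (inc_le_abs_tr h₁ h₁₂ _).trans (abs_tr_le h₂ _)
  have hT : ∀ x, 0 ≤ x → ∀ i ∈ A', ∀ j ∈ B', Integrable fun ω => tr x (X i j ω) :=
    fun x hx i hi j hj => integrable_of_bdd (K := x)
      ((tr_mono hx).measurable.comp (hX i j (hA' i hi) (hB' j hj))) fun ω => abs_tr_le hx _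
  set EP : ℕ → ℕ → ℝ := fun i j => ∫ ω, inc x₁ x₂ (X i j ω) with hEP
  set EN : ℕ → ℕ → ℝ := fun i j => ∫ ω, -inc x₁ x₂ (-X i j ω) with hEN
  have hEP0 : ∀ i j, 0 ≤ EP i j := fun i j => integral_nonneg fun ω => inc_nonneg _ _ _
  have hEN0 : ∀ i j, EN i j ≤ 0 := fun i j => integral_nonpos fun ω => by
    have := inc_nonneg x₁ x₂ (-X i j ω)
    simp only [Pi.zero_apply]
    linarith
  have hE : ∀ i ∈ A', ∀ j ∈ B', EP i j - EN i j ≤ x₂ * p := by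
    intro i hi j hj
    have hms : MeasurableSet {ω | x₁ < |X i j ω|} :=
      measurableSet_lt measurable_const (hX i j (hA' i hi) (hB' j hj)).abs
    have : ∫ ω, x₂ * Set.indicator {ω | x₁ < |X i j ω|} (1 : Ω → ℝ) ω =
        x₂ * (volume {ω | x₁ < |X i j ω|}).toReal := by
      rw [integral_const_mul, integral_indicator_one hms]
      rfl
    rw [hEP, hEN, ← integral_sub (hP i hi j hj) (hN i hi j hj)]
    refine le_trans ?_ (mul_le_mul_of_nonneg_left (hp i hi j hj) h₂)
    rw [← this]
    refine integral_mono ((hP i hi j hj).sub (hN i hi j hj)) ?_ fun ω => ?_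
    · exact ((integrable_const (1 : ℝ)).indicator hms).const_mul x₂
    · have := inc_add_inc_le h₁ h₁₂ (X i j ω)
      simp only [sub_neg_eq_add]
      exact this
  have hpt : ∀ i ∈ A', ∀ j ∈ B', |ctr X (tr x₂) i j ω - ctr X (tr x₁) i j ω| ≤
      ctr X (inc x₁ x₂) i j ω - ctr X (fun x => -inc x₁ x₂ (-x)) i j ω +
        2 * (EP i j - EN i j) := by
    intro i hi j hj
    have e : (∫ ω', tr x₂ (X i j ω')) - ∫ ω', tr x₁ (X i j ω') = EP i j + EN i j := by
      rw [hEP, hEN, ← integral_sub (hT _ h₂ i hi j hj) (hT _ h₁ i hi j hj),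
        ← integral_add (hP i hi j hj) (hN i hi j hj)]
      simp only [tr_sub_tr h₁ h₁₂]
    have e' := tr_sub_tr h₁ h₁₂ (X i j ω)
    have g1 := inc_nonneg x₁ x₂ (X i j ω)
    have g2 := inc_nonneg x₁ x₂ (-X i j ω)
    have g3 := hEP0 i j
    have g4 := hEN0 i j
    have e3 : ctr X (inc x₁ x₂) i j ω = inc x₁ x₂ (X i j ω) - EP i j := rfl
    have e4 : ctr X (fun x => -inc x₁ x₂ (-x)) i j ω = -inc x₁ x₂ (-X i j ω) - EN i j := rfl
    rw [e3, e4]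
    unfold ctr
    rw [abs_le]
    constructor <;> linarith
  have hpos : ∀ i ∈ A', ∀ j ∈ B', 0 ≤ ctr X (inc x₁ x₂) i j ω -
      ctr X (fun x => -inc x₁ x₂ (-x)) i j ω + 2 * (EP i j - EN i j) := fun i hi j hj =>
    (abs_nonneg _).trans (hpt i hi j hj)
  calc |∑ i ∈ A, ∑ j ∈ B, (ctr X (tr x₂) i j ω - ctr X (tr x₁) i j ω)|
      ≤ ∑ i ∈ A, ∑ j ∈ B, |ctr X (tr x₂) i j ω - ctr X (tr x₁) i j ω| :=
        (Finset.abs_sum_le_sum_abs _ _).trans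
          (Finset.sum_le_sum fun i _ => Finset.abs_sum_le_sum_abs _ _)
    _ ≤ ∑ i ∈ A, ∑ j ∈ B, (ctr X (inc x₁ x₂) i j ω -
          ctr X (fun x => -inc x₁ x₂ (-x)) i j ω + 2 * (EP i j - EN i j)) :=
        Finset.sum_le_sum fun i hi => Finset.sum_le_sum fun j hj => hpt i (hA hi) j (hB hj)
    _ ≤ ∑ i ∈ A', ∑ j ∈ B', (ctr X (inc x₁ x₂) i j ω -
          ctr X (fun x => -inc x₁ x₂ (-x)) i j ω + 2 * (EP i j - EN i j)) := by
        refine (Finset.sum_le_sum fun i hi => Finset.sum_le_sum_of_subset_of_nonneg hB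
          fun j hj _ => hpos i (hA hi) j hj).trans ?_
        exact Finset.sum_le_sum_of_subset_of_nonneg hA
          fun i hi _ => Finset.sum_nonneg fun j hj => hpos i hi j hj
    _ = ∑ i ∈ A', ∑ j ∈ B', ctr X (inc x₁ x₂) i j ω -
          ∑ i ∈ A', ∑ j ∈ B', ctr X (fun x => -inc x₁ x₂ (-x)) i j ω +
          2 * ∑ i ∈ A', ∑ j ∈ B', (EP i j - EN i j) := by
        simp only [Finset.sum_add_distrib, Finset.sum_sub_distrib, ← Finset.mul_sum]
    _ ≤ _ := by
        have hs : ∑ i ∈ A', ∑ j ∈ B', (EP i j - EN i j) ≤ (A'.card : ℝ) * B'.card * (x₂ * p) := by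
          refine (Finset.sum_le_sum fun i hi => Finset.sum_le_sum fun j hj => hE i hi j hj).trans ?_
          simp only [Finset.sum_const, nsmul_eq_mul]
          rw [mul_assoc]
        have := le_abs_self (∑ i ∈ A', ∑ j ∈ B', ctr X (inc x₁ x₂) i j ω)
        have := neg_abs_le (∑ i ∈ A', ∑ j ∈ B', ctr X (fun x => -inc x₁ x₂ (-x)) i j ω)
        linarith

lemma rpow_add_le {x y r : ℝ} (hx : 0 ≤ x) (hy : 0 ≤ y) (hr : 0 ≤ r) :
    (x + y) ^ r ≤ (2 * x) ^ r + (2 * y) ^ r := by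
  rcases le_total x y with h | h
  · have h1 : (x + y) ^ r ≤ (2 * y) ^ r := Real.rpow_le_rpow (by positivity) (by linarith) hr
    have h2 : 0 ≤ (2 * x) ^ r := by positivity
    linarith
  · have h1 : (x + y) ^ r ≤ (2 * x) ^ r := Real.rpow_le_rpow (by positivity) (by linarith) hr
    have h2 : 0 ≤ (2 * y) ^ r := by positivity
    linarith

/-! ### Weighted pointwise bound of the maximum -/

/-- Pointwise bound of the maximum: with `κ` the `λ`-weighted `ℓ^{2q}` norm of all block sums, every
block sum at level `(s, t)` is at most `λ s t * κ`, so that chaining yields `κ * ∑ λ`. -/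
lemma maxDS_pow_le {q : ℝ} (hq : 1 ≤ q) {X : ℕ → ℕ → Ω → ℝ}
    (hX : ∀ i j : ℕ, 1 ≤ i → 1 ≤ j → Measurable (X i j)) {b : ℕ → ℝ} (hb : Monotone b)
    (hb0 : ∀ n : ℕ, 1 ≤ n → 0 < b n) {lam : ℕ → ℕ → ℝ} {m n : ℕ} (hn : 1 ≤ n)
    (hlam : ∀ s ∈ Finset.Icc 1 m, ∀ t ∈ Finset.Icc 1 n, 0 < lam s t)
    (Q : ℕ → ℕ → ℝ) (ω : Ω)
    (hQ : ∀ s t, Q s t = blkSum q X m n (s - 1) (t - 1) (tr (b (2 ^ (s + t)))) ω +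
      blkSum q X m n s t (inc (b (2 ^ (s + t - 1))) (b (2 ^ (s + t)))) ω +
      blkSum q X m n s t (fun x => -inc (b (2 ^ (s + t - 1))) (b (2 ^ (s + t))) (-x)) ω) :
    maxDS (fun i j => ctr X (tr (b (2 ^ (m + n)))) i j ω) (2 ^ m - 1) (2 ^ n - 1) ^ (2 * q) ≤
      (10 : ℝ) ^ (2 * q) * ((∑ s ∈ Finset.Icc 1 m, ∑ t ∈ Finset.Icc 1 n, lam s t) ^ (2 * q) *
        ∑ s ∈ Finset.Icc 1 m, ∑ t ∈ Finset.Icc 1 n, lam s t ^ (-(2 * q)) * Q s t) +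
      (8 : ℝ) ^ (2 * q) * (∑ s ∈ Finset.Icc 1 m, ∑ t ∈ Finset.Icc 1 n,
        (2 : ℝ) ^ (s + t) * b (2 ^ (s + t)) * maxNN (2 ^ m - 1) (2 ^ n - 1)
          (fun i j => (volume {ω | b (2 ^ (s + t - 2)) < |X i j ω|}).toReal)) ^ (2 * q) := by
  set G : ℕ → ℕ → ℝ := fun s t => (2 : ℝ) ^ (s + t) * b (2 ^ (s + t)) *
    maxNN (2 ^ m - 1) (2 ^ n - 1)
      (fun i j => (volume {ω | b (2 ^ (s + t - 2)) < |X i j ω|}).toReal) with hG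
  have hbp : ∀ r : ℕ, 0 < b (2 ^ r) := fun r => hb0 _ Nat.one_le_two_pow
  have hG0 : ∀ s t, 0 ≤ G s t := fun s t =>
    mul_nonneg (mul_nonneg (by positivity) (hbp _).le) (maxNN_nonneg _ _ _)
  have hQ0 : ∀ s t, 0 ≤ Q s t := fun s t => by
    rw [hQ]
    exact add_nonneg (add_nonneg (blkSum_nonneg ..) (blkSum_nonneg ..)) (blkSum_nonneg ..)
  set S : ℝ := ∑ s ∈ Finset.Icc 1 m, ∑ t ∈ Finset.Icc 1 n, lam s t ^ (-(2 * q)) * Q s t with hS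
  have hterm0 : ∀ s ∈ Finset.Icc 1 m, ∀ t ∈ Finset.Icc 1 n,
      0 ≤ lam s t ^ (-(2 * q)) * Q s t := fun s hs t ht =>
    mul_nonneg (Real.rpow_nonneg (hlam s hs t ht).le _) (hQ0 s t)
  have hS0 : 0 ≤ S := Finset.sum_nonneg fun s hs => Finset.sum_nonneg fun t ht => hterm0 s hs t ht
  set κ : ℝ := S ^ (2 * q)⁻¹ with hκ
  have hκ0 : 0 ≤ κ := Real.rpow_nonneg hS0 _
  have hκS : κ ^ (2 * q) = S := Real.rpow_inv_rpow hS0 (by linarith)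
  have hQS : ∀ s ∈ Finset.Icc 1 m, ∀ t ∈ Finset.Icc 1 n, Q s t ≤ (lam s t * κ) ^ (2 * q) := by
    intro s hs t ht
    have hl := hlam s hs t ht
    have h1 : lam s t ^ (-(2 * q)) * Q s t ≤ S := by
      refine le_trans ?_ (Finset.single_le_sum (f := fun s => ∑ t ∈ Finset.Icc 1 n,
        lam s t ^ (-(2 * q)) * Q s t) (fun s hs => Finset.sum_nonneg (hterm0 s hs)) hs)
      exact Finset.single_le_sum (f := fun t => lam s t ^ (-(2 * q)) * Q s t) (hterm0 s hs) ht
    rw [Real.mul_rpow hl.le hκ0, hκS]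
    calc Q s t = lam s t ^ (2 * q) * (lam s t ^ (-(2 * q)) * Q s t) := by
          rw [← mul_assoc, ← Real.rpow_add hl]
          simp
      _ ≤ _ := mul_le_mul_of_nonneg_left h1 (by positivity)
  have hroot : ∀ s ∈ Finset.Icc 1 m, ∀ t ∈ Finset.Icc 1 n, ∀ x : ℝ,
      |x| ^ (2 * q) ≤ Q s t → |x| ≤ lam s t * κ := fun s hs t ht x hx =>
    (Real.rpow_le_rpow_iff (abs_nonneg _) (mul_nonneg (hlam s hs t ht).le hκ0)
      (by linarith : 0 < 2 * q)).1 (hx.trans (hQS s hs t ht))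
  have hmax : maxDS (fun i j => ctr X (tr (b (2 ^ (m + n)))) i j ω) (2 ^ m - 1) (2 ^ n - 1) ≤
      5 * ((∑ s ∈ Finset.Icc 1 m, ∑ t ∈ Finset.Icc 1 n, lam s t) * κ) +
        4 * ∑ s ∈ Finset.Icc 1 m, ∑ t ∈ Finset.Icc 1 n, G s t := by
    have hrhs : ∑ s ∈ Finset.Icc 1 m, ∑ t ∈ Finset.Icc 1 n,
        (lam s t * κ + 2 * (2 * (lam s t * κ) + 2 * G s t)) =
        5 * ((∑ s ∈ Finset.Icc 1 m, ∑ t ∈ Finset.Icc 1 n, lam s t) * κ) +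
        4 * ∑ s ∈ Finset.Icc 1 m, ∑ t ∈ Finset.Icc 1 n, G s t := by
      simp only [Finset.sum_mul, Finset.mul_sum, ← Finset.sum_add_distrib]
      exact Finset.sum_congr rfl fun s _ => Finset.sum_congr rfl fun t _ => by ring
    rw [← hrhs]
    have hl0 : ∀ s ∈ Finset.Icc 1 m, ∀ t ∈ Finset.Icc 1 n, 0 ≤ lam s t * κ :=
      fun s hs t ht => mul_nonneg (hlam s hs t ht).le hκ0
    have hV0 : ∀ s ∈ Finset.Icc 1 m, ∀ t ∈ Finset.Icc 1 n,
        0 ≤ 2 * (lam s t * κ) + 2 * G s t := fun s hs t ht => by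
      have := hl0 s hs t ht
      have := hG0 s t
      positivity
    refine maxNN_le _ (Finset.sum_nonneg fun s hs => Finset.sum_nonneg fun t ht => by
      have := hl0 s hs t ht
      have := hV0 s hs t ht
      positivity) fun u hu v hv => ?_
    rw [Finset.mem_Icc] at hu hv
    have p1 : 0 < 2 ^ m := by positivity
    have p2 : 0 < 2 ^ n := by positivity
    refine chaining (fun r i j => ctr X (tr (b (2 ^ r))) i j ω) (fun s t => lam s t * κ)
      (fun s t => 2 * (lam s t * κ) + 2 * G s t) hn (by omega) (by omega) hu.2 hv.2
      hl0 hV0 ?_ ?_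
    · intro s hs t ht k hk l hl
      refine hroot s hs t ht _ ?_
      have h1 := pow_block_le_blkSum q X (tr (b (2 ^ (s + t)))) ω hk hl
      refine h1.trans ?_
      rw [hQ]
      have := blkSum_nonneg q X m n s t (inc (b (2 ^ (s + t - 1))) (b (2 ^ (s + t)))) ω
      have := blkSum_nonneg q X m n s t
        (fun x => -inc (b (2 ^ (s + t - 1))) (b (2 ^ (s + t))) (-x)) ω
      linarith
    · intro s hs t ht k hk l hl A hA B hB
      have hs' := Finset.mem_Icc.1 hs
      have ht' := Finset.mem_Icc.1 ht
      have hmono : b (2 ^ (s + t - 1)) ≤ b (2 ^ (s + t)) :=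
        hb (Nat.pow_le_pow_right (by norm_num) (by omega))
      have hmono' : b (2 ^ (s + t - 2)) ≤ b (2 ^ (s + t - 1)) :=
        hb (Nat.pow_le_pow_right (by norm_num) (by omega))
      set p := maxNN (2 ^ m - 1) (2 ^ n - 1)
        (fun i j => (volume {ω | b (2 ^ (s + t - 2)) < |X i j ω|}).toReal) with hp
      have hp0 : 0 ≤ p := maxNN_nonneg _ _ _
      have key := abs_sum_ctr_tr_sub_le hX (hbp _).le hmono hA hB
        (fun i => one_le_of_mem_blk) (fun i => one_le_of_mem_blk) (p := p) (fun i hi j hj => by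
          refine le_trans ?_ (le_maxNN
            (fun i j => (volume {ω | b (2 ^ (s + t - 2)) < |X i j ω|}).toReal)
            (blk_subset _ _ _ hi) (blk_subset _ _ _ hj))
          exact ENNReal.toReal_mono (measure_ne_top _ _)
            (measure_mono fun ω' h => lt_of_le_of_lt hmono' h)) ω
      have k1 := hroot s hs t ht _ (le_trans (pow_block_le_blkSum q X
        (inc (b (2 ^ (s + t - 1))) (b (2 ^ (s + t)))) ω hk hl) (by
          rw [hQ]
          have := blkSum_nonneg q X m n (s - 1) (t - 1) (tr (b (2 ^ (s + t)))) ω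
          have := blkSum_nonneg q X m n s t
            (fun x => -inc (b (2 ^ (s + t - 1))) (b (2 ^ (s + t))) (-x)) ω
          linarith))
      have k2 := hroot s hs t ht _ (le_trans (pow_block_le_blkSum q X
        (fun x => -inc (b (2 ^ (s + t - 1))) (b (2 ^ (s + t))) (-x)) ω hk hl) (by
          rw [hQ]
          have := blkSum_nonneg q X m n (s - 1) (t - 1) (tr (b (2 ^ (s + t)))) ω
          have := blkSum_nonneg q X m n s t (inc (b (2 ^ (s + t - 1))) (b (2 ^ (s + t)))) ω
          linarith))
      have k3 : ((blk (2 ^ m - 1) s k).card : ℝ) * (blk (2 ^ n - 1) t l).card *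
          (b (2 ^ (s + t)) * p) ≤ G s t := by
        have h := Nat.mul_le_mul (card_blk_le (2 ^ m - 1) s k) (card_blk_le (2 ^ n - 1) t l)
        rw [← pow_add] at h
        have h' : ((blk (2 ^ m - 1) s k).card : ℝ) * (blk (2 ^ n - 1) t l).card ≤
            (2 : ℝ) ^ (s + t) := by exact_mod_cast h
        rw [hG]
        simp only
        rw [← hp, mul_assoc ((2 : ℝ) ^ (s + t))]
        exact mul_le_mul_of_nonneg_right h' (mul_nonneg (hbp _).le hp0)
      refine key.trans ?_
      linarith
  have hLκ : 0 ≤ (∑ s ∈ Finset.Icc 1 m, ∑ t ∈ Finset.Icc 1 n, lam s t) :=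
    Finset.sum_nonneg fun s hs => Finset.sum_nonneg fun t ht => (hlam s hs t ht).le
  have hGS : 0 ≤ ∑ s ∈ Finset.Icc 1 m, ∑ t ∈ Finset.Icc 1 n, G s t :=
    Finset.sum_nonneg fun s _ => Finset.sum_nonneg fun t _ => hG0 s t
  refine (Real.rpow_le_rpow (maxNN_nonneg _ _ _) hmax (by linarith)).trans ?_
  -- Doubling the coefficients `5` and `4` separates the two terms and produces `10` and `8`.
  refine (rpow_add_le (mul_nonneg (by norm_num) (mul_nonneg hLκ hκ0))
    (mul_nonneg (by norm_num) hGS) (by linarith)).trans (le_of_eq ?_)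
  rw [← hκS, ← Real.mul_rpow hLκ hκ0, ← Real.mul_rpow (by norm_num) (mul_nonneg hLκ hκ0),
    ← Real.mul_rpow (by norm_num) hGS]
  ring_nf

end RosenthalMax

open RosenthalMax in
/-- Rosenthal-type maximal inequality for double sums of two-sidedly truncated
integrable (not necessarily nonnegative) dependent random variables, with a
constant depending only on `q` (and on the constant in Condition (H_{2q})). -/
theorem rosenthal_maximal_inequality_truncated_signed
    (q C₀ : ℝ) (hq : 1 ≤ q) :
    ∃ C : ℝ, ∀ (Ω : Type) [MeasureSpace Ω] [IsProbabilityMeasure (volume : Measure Ω)],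
      ∀ X : ℕ → ℕ → Ω → ℝ,
      (∀ i j : ℕ, 1 ≤ i → 1 ≤ j → Measurable (X i j)) →
      (∀ i j : ℕ, 1 ≤ i → 1 ≤ j → Integrable (X i j)) →
      CondHWith q C₀ (fun k : PIdx => X k.1.1 k.1.2) →
      ∀ b : ℕ → ℝ, Monotone b → (∀ n : ℕ, 1 ≤ n → 0 < b n) →
      ∀ lam : ℕ → ℕ → ℕ → ℕ → ℝ,
      (∀ m n i j : ℕ, 1 ≤ i → i ≤ m → 1 ≤ j → j ≤ n → 0 < lam m n i j) →
      ∀ m n : ℕ, 1 ≤ m → 1 ≤ n →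
        ∫ ω, (maxDS (fun i j => truncTwo X b (m + n) i j ω - ∫ ω', truncTwo X b (m + n) i j ω')
            (2 ^ m - 1) (2 ^ n - 1)) ^ (2 * q) ≤
          C * (∑ s ∈ Finset.Icc 1 m, ∑ t ∈ Finset.Icc 1 n,
              (2 : ℝ) ^ (s + t) * b (2 ^ (s + t)) *
                maxNN (2 ^ m - 1) (2 ^ n - 1)
                  (fun i j => (volume {ω | b (2 ^ (s + t - 2)) < |X i j ω|}).toReal)) ^ (2 * q) +
          C * (∑ s ∈ Finset.Icc 1 m, ∑ t ∈ Finset.Icc 1 n, lam m n s t) ^ (2 * q) *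
            ∑ s ∈ Finset.Icc 1 m, ∑ t ∈ Finset.Icc 1 n,
              (2 : ℝ) ^ (m + n) * lam m n s t ^ (-(2 * q)) *
                (maxNN (2 ^ m - 1) (2 ^ n - 1)
                    (fun i j => ∫ ω, |truncTwo X b (s + t) i j ω| ^ (2 * q)) +
                  (2 : ℝ) ^ (((s + t : ℕ) : ℝ) * (q - 1)) *
                    maxNN (2 ^ m - 1) (2 ^ n - 1)
                      (fun i j => (∫ ω, truncTwo X b (s + t) i j ω ^ 2) ^ q)) := by
  refine ⟨10 ^ (2 * q) * (3 * |C₀|) + 8 ^ (2 * q), ?_⟩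
  intro Ω _ _ X hX _ hH b hb hb0 lam hlam m n hm hn
  have hbp : ∀ r : ℕ, 0 < b (2 ^ r) := fun r => hb0 _ Nat.one_le_two_pow
  have hlam' : ∀ s ∈ Finset.Icc 1 m, ∀ t ∈ Finset.Icc 1 n, 0 < lam m n s t := fun s hs t ht =>
    hlam m n s t (Finset.mem_Icc.1 hs).1 (Finset.mem_Icc.1 hs).2 (Finset.mem_Icc.1 ht).1
      (Finset.mem_Icc.1 ht).2
  set G : ℝ := ∑ s ∈ Finset.Icc 1 m, ∑ t ∈ Finset.Icc 1 n,
    (2 : ℝ) ^ (s + t) * b (2 ^ (s + t)) * maxNN (2 ^ m - 1) (2 ^ n - 1)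
      (fun i j => (volume {ω | b (2 ^ (s + t - 2)) < |X i j ω|}).toReal) with hG
  set L : ℝ := ∑ s ∈ Finset.Icc 1 m, ∑ t ∈ Finset.Icc 1 n, lam m n s t with hL
  have hL0 : 0 ≤ L :=
    Finset.sum_nonneg fun s hs => Finset.sum_nonneg fun t ht => (hlam' s hs t ht).le
  have hG0 : 0 ≤ G := Finset.sum_nonneg fun s _ => Finset.sum_nonneg fun t _ =>
    mul_nonneg (mul_nonneg (by positivity) (hbp _).le) (maxNN_nonneg _ _ _)
  set R : ℕ → ℕ → ℝ := fun s t => maxNN (2 ^ m - 1) (2 ^ n - 1)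
      (fun i j => ∫ ω, |truncTwo X b (s + t) i j ω| ^ (2 * q)) +
    (2 : ℝ) ^ (((s + t : ℕ) : ℝ) * (q - 1)) * maxNN (2 ^ m - 1) (2 ^ n - 1)
      (fun i j => (∫ ω, truncTwo X b (s + t) i j ω ^ 2) ^ q) with hR
  have hR0 : ∀ s t, 0 ≤ R s t := fun s t =>
    add_nonneg (maxNN_nonneg _ _ _) (mul_nonneg (by positivity) (maxNN_nonneg _ _ _))
  set Q : Ω → ℕ → ℕ → ℝ := fun ω s t =>
      blkSum q X m n (s - 1) (t - 1) (tr (b (2 ^ (s + t)))) ω +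
      blkSum q X m n s t (inc (b (2 ^ (s + t - 1))) (b (2 ^ (s + t)))) ω +
      blkSum q X m n s t (fun x => -inc (b (2 ^ (s + t - 1))) (b (2 ^ (s + t))) (-x)) ω with hQ
  have hQint : ∀ s ∈ Finset.Icc 1 m, ∀ t ∈ Finset.Icc 1 n,
      Integrable (fun ω => Q ω s t) ∧
        ∫ ω, Q ω s t ≤ 3 * |C₀| * ((2 : ℝ) ^ (m + n) * R s t) := by
    intro s hs t ht
    rw [Finset.mem_Icc] at hs ht
    have hmono : b (2 ^ (s + t - 1)) ≤ b (2 ^ (s + t)) :=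
      hb (Nat.pow_le_pow_right (by norm_num) (by omega))
    have a1 : ∀ x, |inc (b (2 ^ (s + t - 1))) (b (2 ^ (s + t))) x| ≤ |tr (b (2 ^ (s + t))) x| :=
      fun x => by
        rw [abs_of_nonneg (inc_nonneg _ _ _)]
        exact inc_le_abs_tr (hbp _).le hmono x
    have a2 : ∀ x, |-inc (b (2 ^ (s + t - 1))) (b (2 ^ (s + t))) (-x)| ≤
        |tr (b (2 ^ (s + t))) x| := fun x => by
      rw [abs_neg, ← abs_tr_neg (hbp _).le]
      exact a1 (-x)
    have m2 : Monotone fun x => -inc (b (2 ^ (s + t - 1))) (b (2 ^ (s + t))) (-x) :=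
      fun x y hxy => neg_le_neg (inc_mono _ _ (neg_le_neg hxy))
    have bd := abs_tr_le (hbp (s + t)).le
    have i1 := integrable_blkSum hq hX (tr_mono (hbp (s + t)).le).measurable bd m n (s - 1) (t - 1)
    have i2 := integrable_blkSum hq hX (inc_mono (b (2 ^ (s + t - 1))) (b (2 ^ (s + t)))).measurable
      (fun x => (a1 x).trans (bd x)) m n s t
    have i3 := integrable_blkSum hq hX m2.measurable (fun x => (a2 x).trans (bd x)) m n s t
    have e1 := integral_blkSum_le hq hX hH (tr_mono (hbp (s + t)).le) (hbp (s + t)).le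
      (fun x => le_rfl) (m := m) (n := n) (a := s - 1) (c := t - 1) (r := s + t)
      (by omega) (by omega) (by omega)
    have e2 := integral_blkSum_le hq hX hH (inc_mono _ _) (hbp (s + t)).le
      a1 hs.2 ht.2 le_rfl
    have e3 := integral_blkSum_le hq hX hH m2 (hbp (s + t)).le a2 hs.2 ht.2 le_rfl
    refine ⟨(i1.add i2).add i3, ?_⟩
    have : ∫ ω, Q ω s t = _ := integral_add (i1.add i2) i3
    rw [this, integral_add i1 i2]
    refine (add_le_add (add_le_add e1 e2) e3).trans (le_of_eq ?_)
    change |C₀| * ((2 : ℝ) ^ (m + n) * R s t) + |C₀| * ((2 : ℝ) ^ (m + n) * R s t) +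
      |C₀| * ((2 : ℝ) ^ (m + n) * R s t) = _
    ring
  have hSint : Integrable fun ω => ∑ s ∈ Finset.Icc 1 m, ∑ t ∈ Finset.Icc 1 n,
      lam m n s t ^ (-(2 * q)) * Q ω s t :=
    integrable_finsetSum _ fun s hs => integrable_finsetSum _ fun t ht =>
      (hQint s hs t ht).1.const_mul _
  have hSle : ∫ ω, ∑ s ∈ Finset.Icc 1 m, ∑ t ∈ Finset.Icc 1 n,
      lam m n s t ^ (-(2 * q)) * Q ω s t ≤ 3 * |C₀| *
      ∑ s ∈ Finset.Icc 1 m, ∑ t ∈ Finset.Icc 1 n,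
        (2 : ℝ) ^ (m + n) * lam m n s t ^ (-(2 * q)) * R s t := by
    rw [integral_finsetSum _ fun s hs => integrable_finsetSum _ fun t ht =>
      (hQint s hs t ht).1.const_mul _, Finset.mul_sum]
    refine Finset.sum_le_sum fun s hs => ?_
    rw [integral_finsetSum _ fun t ht => (hQint s hs t ht).1.const_mul _, Finset.mul_sum]
    refine Finset.sum_le_sum fun t ht => ?_
    rw [integral_const_mul]
    have hl := Real.rpow_nonneg (hlam' s hs t ht).le (-(2 * q))
    refine (mul_le_mul_of_nonneg_left (hQint s hs t ht).2 hl).trans (le_of_eq ?_)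
    ring
  have hpt : ∀ ω, maxDS (fun i j => truncTwo X b (m + n) i j ω - ∫ ω', truncTwo X b (m + n) i j ω')
      (2 ^ m - 1) (2 ^ n - 1) ^ (2 * q) ≤
      (10 : ℝ) ^ (2 * q) * (L ^ (2 * q) * ∑ s ∈ Finset.Icc 1 m, ∑ t ∈ Finset.Icc 1 n,
        lam m n s t ^ (-(2 * q)) * Q ω s t) + (8 : ℝ) ^ (2 * q) * G ^ (2 * q) := fun ω =>
    maxDS_pow_le hq hX hb hb0 hn hlam' (Q ω) ω fun s t => rfl
  have hI := integral_mono_of_nonneg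
    (ae_of_all volume fun ω => Real.rpow_nonneg (maxNN_nonneg _ _ _) _)
    (((hSint.const_mul (L ^ (2 * q))).const_mul ((10 : ℝ) ^ (2 * q))).add
      (integrable_const ((8 : ℝ) ^ (2 * q) * G ^ (2 * q)))) (ae_of_all volume hpt)
  refine hI.trans ?_
  simp only [Pi.add_apply]
  rw [integral_add ((hSint.const_mul _).const_mul _) (integrable_const _), integral_const_mul,
    integral_const_mul, integral_const, probReal_univ, one_smul]
  set U : ℝ := ∑ s ∈ Finset.Icc 1 m, ∑ t ∈ Finset.Icc 1 n,
    (2 : ℝ) ^ (m + n) * lam m n s t ^ (-(2 * q)) * R s t with hU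
  have hU0 : 0 ≤ U := Finset.sum_nonneg fun s hs => Finset.sum_nonneg fun t ht =>
    mul_nonneg (mul_nonneg (by positivity) (Real.rpow_nonneg (hlam' s hs t ht).le _)) (hR0 s t)
  have hT : 0 ≤ (10 : ℝ) ^ (2 * q) * (3 * |C₀|) := by positivity
  have h8 : 0 ≤ (8 : ℝ) ^ (2 * q) := by positivity
  have hGp : 0 ≤ G ^ (2 * q) := by positivity
  have hLp : 0 ≤ L ^ (2 * q) := by positivity
  calc (10 : ℝ) ^ (2 * q) * (L ^ (2 * q) * ∫ ω, ∑ s ∈ Finset.Icc 1 m, ∑ t ∈ Finset.Icc 1 n,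
          lam m n s t ^ (-(2 * q)) * Q ω s t) + (8 : ℝ) ^ (2 * q) * G ^ (2 * q)
      ≤ (10 : ℝ) ^ (2 * q) * (L ^ (2 * q) * (3 * |C₀| * U)) + (8 : ℝ) ^ (2 * q) * G ^ (2 * q) := by
        gcongr
    _ ≤ _ := by
        have t1 := mul_nonneg hT hGp
        have t2 := mul_nonneg h8 (mul_nonneg hLp hU0)
        linarith
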